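/- Let r > 0 and ε ∈ (0,1). Let a and F be continuous on the closed half-ball B̄_{2r}⁺ with |a| ≤ 1 and F ≤ −ε on B̄_{2r}⁺, and let H be continuous on Γ̄_{2r} with H ≤ −ε. If v is a C² function on B̄_{2r}⁺ solving −Δv = a + F e^{2v} in B_{2r}⁺ and ∂v/∂ν = H e^{v} on Γ_{2r}, then there exists a constant C depending only on r and ε (and not on v, a, F, H) such that ∫_{B_r⁺} ( |∇v⁺|² + (v⁺)⁴ ) dx + ∫_{Γ_r} (v⁺)² dl ≤ C, where v⁺ = max(v, 0). -/

import Mathlib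

open MeasureTheory Filter

noncomputable section

/-- Euclidean norm on `ℝ × ℝ`. -/
def nrm (p : ℝ × ℝ) : ℝ := Real.sqrt (p.1 ^ 2 + p.2 ^ 2)

/-- Euclidean Laplacian `Δw = ∂²w/∂s² + ∂²w/∂t²` of `w : ℝ × ℝ → ℝ`. -/
def lap (w : ℝ × ℝ → ℝ) (p : ℝ × ℝ) : ℝ :=
  deriv (fun s => deriv (fun s' => w (s', p.2)) s) p.1 +
    deriv (fun t => deriv (fun t' => w (p.1, t')) t) p.2

/-- The open upper half-ball `B_r⁺` of radius `r` centered at `0`. -/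
def ballPlus (r : ℝ) : Set (ℝ × ℝ) := {p | nrm p < r ∧ 0 < p.2}

/-- The closed upper half-ball `B̄_r⁺` of radius `r` centered at `0`. -/
def cballPlus (r : ℝ) : Set (ℝ × ℝ) := {p | nrm p ≤ r ∧ 0 ≤ p.2}

/-- Squared Euclidean gradient `|∇u|² = (∂u/∂s)² + (∂u/∂t)²`. -/
def gradSq (u : ℝ × ℝ → ℝ) (p : ℝ × ℝ) : ℝ :=
  (deriv (fun s => u (s, p.2)) p.1) ^ 2 + (deriv (fun t => u (p.1, t)) p.2) ^ 2

lemma nrm_le_iff {p : ℝ × ℝ} {R : ℝ} (hR : 0 ≤ R) : nrm p ≤ R ↔ p.1 ^ 2 + p.2 ^ 2 ≤ R ^ 2 :=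
  Real.sqrt_le_left hR

lemma nrm_lt_iff {p : ℝ × ℝ} {R : ℝ} (hR : 0 < R) : nrm p < R ↔ p.1 ^ 2 + p.2 ^ 2 < R ^ 2 :=
  Real.sqrt_lt' hR

lemma ballPlus_open {R : ℝ} (hR : 0 < R) : IsOpen (ballPlus R) := by
  have : ballPlus R = {p : ℝ × ℝ | p.1 ^ 2 + p.2 ^ 2 < R ^ 2} ∩ {p | 0 < p.2} := by
    ext p; simp only [ballPlus, Set.mem_ofPred_eq, nrm_lt_iff hR, Set.mem_inter_iff]
  rw [this]
  exact (isOpen_lt (by fun_prop) (by fun_prop)).inter (isOpen_lt (by fun_prop) (by fun_prop))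

lemma ballPlus_sub {R : ℝ} : ballPlus R ⊆ cballPlus R := fun _ hp => ⟨hp.1.le, hp.2.le⟩

lemma cballPlus_convex {R : ℝ} (hR : 0 < R) : Convex ℝ (cballPlus R) := by
  intro p hp q hq x y hx hy hxy
  obtain ⟨p1, p2⟩ := p
  obtain ⟨q1, q2⟩ := q
  simp only [cballPlus, Set.mem_ofPred_eq, nrm_le_iff hR.le, Prod.smul_mk, Prod.mk_add_mk,
    smul_eq_mul] at hp hq ⊢
  obtain rfl : y = 1 - x := by linarith
  refine ⟨?_, add_nonneg (mul_nonneg hx hp.2) (mul_nonneg hy hq.2)⟩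
  nlinarith [mul_le_mul_of_nonneg_left hp.1 hx, mul_le_mul_of_nonneg_left hq.1 hy,
    mul_nonneg (mul_nonneg hx hy) (add_nonneg (sq_nonneg (p1 - q1)) (sq_nonneg (p2 - q2)))]

lemma cballPlus_uniq {R : ℝ} (hR : 0 < R) : UniqueDiffOn ℝ (cballPlus R) := by
  apply uniqueDiffOn_convex (cballPlus_convex hR)
  refine ⟨(0, R / 2), interior_maximal ballPlus_sub (ballPlus_open hR) ?_⟩
  simp only [ballPlus, Set.mem_ofPred_eq, nrm_lt_iff hR]
  constructor <;> nlinarith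

/-- partial derivatives along lines -/
lemma line1 {f : ℝ × ℝ → ℝ} {L : ℝ × ℝ →L[ℝ] ℝ} {p : ℝ × ℝ} (h : HasFDerivAt f L p) :
    HasDerivAt (fun s => f (s, p.2)) (L (1, 0)) p.1 := by
  have h1 : HasDerivAt (fun s : ℝ => (s, p.2)) ((1 : ℝ), (0 : ℝ)) p.1 :=
    (hasDerivAt_id p.1).prodMk (hasDerivAt_const p.1 p.2)
  exact HasFDerivAt.comp_hasDerivAt (f := fun s : ℝ => (s, p.2)) p.1 h h1

lemma line2 {f : ℝ × ℝ → ℝ} {L : ℝ × ℝ →L[ℝ] ℝ} {p : ℝ × ℝ} (h : HasFDerivAt f L p) :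
    HasDerivAt (fun t => f (p.1, t)) (L (0, 1)) p.2 := by
  have h1 : HasDerivAt (fun t : ℝ => (p.1, t)) ((0 : ℝ), (1 : ℝ)) p.2 :=
    (hasDerivAt_const p.2 p.1).prodMk (hasDerivAt_id p.2)
  exact HasFDerivAt.comp_hasDerivAt (f := fun t : ℝ => (p.1, t)) p.2 h h1

lemma rect_sub {r : ℝ} (hr : 0 < r) :
    Set.Icc ((-(5 * r / 4), 0) : ℝ × ℝ) (5 * r / 4, 5 * r / 4) ⊆ cballPlus (2 * r) := by
  rintro ⟨s, t⟩ ⟨⟨h1, h2⟩, ⟨h3, h4⟩⟩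
  simp only [cballPlus, Set.mem_ofPred_eq, nrm_le_iff (by positivity : 0 ≤ 2 * r)] at *
  exact ⟨by nlinarith, h2⟩

lemma rect_int {r : ℝ} (hr : 0 < r) :
    Set.Ioo (-(5 * r / 4)) (5 * r / 4) ×ˢ Set.Ioo 0 (5 * r / 4) ⊆ ballPlus (2 * r) := by
  rintro ⟨s, t⟩ ⟨⟨h1, h2⟩, ⟨h3, h4⟩⟩
  simp only [ballPlus, Set.mem_ofPred_eq, nrm_lt_iff (by positivity : 0 < 2 * r)] at *
  exact ⟨by nlinarith, h3⟩

def eta (ρ : ℝ) (p : ℝ × ℝ) : ℝ := (ρ ^ 2 - p.1 ^ 2) * (ρ ^ 2 - p.2 ^ 2)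

/-- derivative of `max f 0` -/
lemma deriv_max_sq {f : ℝ → ℝ} {f' x : ℝ} (h : HasDerivAt f f' x) :
    (deriv (fun y => max (f y) 0) x) ^ 2 ≤ Real.exp (f x) * f' ^ 2 := by
  have hpos : 0 ≤ Real.exp (f x) * f' ^ 2 := by positivity
  rcases lt_trichotomy (f x) 0 with hx | hx | hx
  · have : (fun y => max (f y) 0) =ᶠ[nhds x] fun _ => 0 := by
      filter_upwards [h.continuousAt.eventually_lt continuousAt_const hx] with y hy
      exact max_eq_right hy.le
    rw [this.deriv_eq]; simpa using hpos
  · have : IsLocalMin (fun y => max (f y) 0) x := by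
      filter_upwards with y
      simp [hx]
    rw [this.deriv_eq_zero]; simpa using hpos
  · have : (fun y => max (f y) 0) =ᶠ[nhds x] f := by
      filter_upwards [continuousAt_const.eventually_lt h.continuousAt hx] with y hy
      exact max_eq_left (le_of_lt hy)
    rw [this.deriv_eq, h.deriv]
    have := Real.one_le_exp hx.le
    nlinarith [sq_nonneg f']

lemma pow4_le (x : ℝ) : max x 0 ^ 4 ≤ 24 * Real.exp x ^ 3 := by
  rcases le_total x 0 with h | h
  · rw [max_eq_right h]; simp only [ne_eq, OfNat.ofNat_ne_zero, not_false_eq_true, zero_pow]; positivity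
  · rw [max_eq_left h]
    have h1 := Real.pow_div_factorial_le_exp x h 4
    have h2 := Real.one_le_exp h
    norm_num [Nat.factorial] at h1
    have h3 : Real.exp x ≤ Real.exp x ^ 3 := le_self_pow₀ h2 (by norm_num)
    linarith

lemma pow2_le (x : ℝ) : max x 0 ^ 2 ≤ 2 * Real.exp x ^ 2 := by
  rcases le_total x 0 with h | h
  · rw [max_eq_right h]; simp only [ne_eq, OfNat.ofNat_ne_zero, not_false_eq_true, zero_pow]; positivity
  · rw [max_eq_left h]
    have h1 := Real.pow_div_factorial_le_exp x h 2
    have h2 := Real.one_le_exp h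
    norm_num [Nat.factorial] at h1
    have h3 : Real.exp x ≤ Real.exp x ^ 2 := le_self_pow₀ h2 (by norm_num)
    linarith

/-- The algebraic pointwise estimate. -/
lemma pointwise {η e P Q es et a F ε M : ℝ} (hη : 0 ≤ η) (he : 0 < e) (hε : 0 < ε) (ha : |a| ≤ 1)
    (hF : F ≤ -ε) (hM : η ^ 2 + 9 / 2 * (es ^ 2 + et ^ 2) ≤ M) :
    η ^ 3 * (1 / 2 * (e * (P ^ 2 + Q ^ 2)) + ε / 2 * e ^ 3) - M * (1 + 2 * M / ε) ≤
      η ^ 3 * e * (P ^ 2 + Q ^ 2) + 3 * η ^ 2 * e * (es * P + et * Q)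
        - η ^ 3 * e * (a + F * e ^ 2) := by
  have hM0 : 0 ≤ M := le_trans (by positivity) hM
  have h1 : 0 ≤ η * e * ((η * P + 3 * es) ^ 2 + (η * Q + 3 * et) ^ 2) := by positivity
  have h2 : η ^ 3 * e * a ≤ η ^ 3 * e :=
    mul_le_of_le_one_right (by positivity) (le_of_abs_le ha)
  have h3 : η ^ 3 * e ^ 3 * F ≤ η ^ 3 * e ^ 3 * (-ε) :=
    mul_le_mul_of_nonneg_left hF (by positivity)
  have h4 : (η * e) * (η ^ 2 + 9 / 2 * (es ^ 2 + et ^ 2)) ≤ (η * e) * M :=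
    mul_le_mul_of_nonneg_left hM (by positivity)
  have h5 : (η * e) * M ≤ ε / 2 * (η * e) ^ 3 + M * (1 + 2 * M / ε) := by
    set X := η * e with hX
    have hX0 : 0 ≤ X := by positivity
    rcases le_total (2 * M / ε) (X ^ 2) with h | h
    · have h' : M ≤ ε / 2 * X ^ 2 := by
        rw [div_le_iff₀ hε] at h; linarith
      have : X * M ≤ X * (ε / 2 * X ^ 2) := mul_le_mul_of_nonneg_left h' hX0
      have : 0 ≤ M * (1 + 2 * M / ε) := by positivity
      nlinarith
    · have : X ≤ 1 + 2 * M / ε := by nlinarith [sq_nonneg (X - 1)]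
      have := mul_le_mul_of_nonneg_left this hM0
      have : 0 ≤ ε / 2 * X ^ 3 := by positivity
      linarith
  nlinarith

/-- Interior facts: first derivatives and the Laplacian. -/
lemma interior_facts {r : ℝ} (hr : 0 < r) {v : ℝ × ℝ → ℝ}
    (hv : ContDiffOn ℝ 2 v (cballPlus (2 * r))) {p : ℝ × ℝ} (hp : p ∈ ballPlus (2 * r)) :
    HasFDerivAt v (fderivWithin ℝ v (cballPlus (2 * r)) p) p ∧
    DifferentiableAt ℝ (fun q => fderivWithin ℝ v (cballPlus (2 * r)) q (1, 0)) p ∧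
    DifferentiableAt ℝ (fun q => fderivWithin ℝ v (cballPlus (2 * r)) q (0, 1)) p ∧
    lap v p = fderiv ℝ (fun q => fderivWithin ℝ v (cballPlus (2 * r)) q (1, 0)) p (1, 0) +
      fderiv ℝ (fun q => fderivWithin ℝ v (cballPlus (2 * r)) q (0, 1)) p (0, 1) := by
  have hR : 0 < 2 * r := by positivity
  have hB : ∀ q ∈ ballPlus (2 * r), HasFDerivAt v (fderivWithin ℝ v (cballPlus (2 * r)) q) q := by
    intro q hq
    exact ((hv.differentiableOn (by norm_num)) q (ballPlus_sub hq)).hasFDerivWithinAt.hasFDerivAt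
      (mem_of_superset ((ballPlus_open hR).mem_nhds hq) ballPlus_sub)
  have hL : DifferentiableAt ℝ (fderivWithin ℝ v (cballPlus (2 * r))) p := by
    have := hv.fderivWithin (m := 1) (cballPlus_uniq hR) (by norm_num)
    exact ((this.differentiableOn (by norm_num)) p (ballPlus_sub hp)).differentiableAt
      (mem_of_superset ((ballPlus_open hR).mem_nhds hp) ballPlus_sub)
  have h1 : DifferentiableAt ℝ (fun q => fderivWithin ℝ v (cballPlus (2 * r)) q (1, 0)) p :=
    hL.clm_apply (differentiableAt_const _)
  have h2 : DifferentiableAt ℝ (fun q => fderivWithin ℝ v (cballPlus (2 * r)) q (0, 1)) p :=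
    hL.clm_apply (differentiableAt_const _)
  refine ⟨hB p hp, h1, h2, ?_⟩
  have hnb := (ballPlus_open hR).mem_nhds hp
  unfold lap
  congr 1
  · have e1 : (fun s => deriv (fun s' => v (s', p.2)) s) =ᶠ[nhds p.1]
        fun s => fderivWithin ℝ v (cballPlus (2 * r)) (s, p.2) (1, 0) := by
      have hc : ContinuousAt (fun s : ℝ => (s, p.2)) p.1 := by fun_prop
      filter_upwards [hc.preimage_mem_nhds hnb] with s hs
      exact (line1 (p := (s, p.2)) (hB _ hs)).deriv
    rw [e1.deriv_eq]
    exact (line1 h1.hasFDerivAt).deriv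
  · have e1 : (fun s => deriv (fun s' => v (p.1, s')) s) =ᶠ[nhds p.2]
        fun s => fderivWithin ℝ v (cballPlus (2 * r)) (p.1, s) (0, 1) := by
      have hc : ContinuousAt (fun s : ℝ => (p.1, s)) p.2 := by fun_prop
      filter_upwards [hc.preimage_mem_nhds hnb] with s hs
      exact (line2 (p := (p.1, s)) (hB _ hs)).deriv
    rw [e1.deriv_eq]
    exact (line2 h2.hasFDerivAt).deriv

lemma boundary_fact {r : ℝ} (hr : 0 < r) {v : ℝ × ℝ → ℝ}
    (hv : ContDiffOn ℝ 2 v (cballPlus (2 * r))) {s : ℝ} (hs : |s| < 2 * r) :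
    derivWithin (fun t => v (s, t)) (Set.Ici 0) 0 =
      fderivWithin ℝ v (cballPlus (2 * r)) (s, 0) (0, 1) := by
  have hR : 0 < 2 * r := by positivity
  have hs2 : s ^ 2 < (2 * r) ^ 2 := sq_lt_sq' (by linarith [neg_abs_le s]) (by linarith [le_abs_self s])
  have hmem : (s, (0 : ℝ)) ∈ cballPlus (2 * r) := by
    simp only [cballPlus, Set.mem_ofPred_eq, nrm_le_iff hR.le]
    exact ⟨by linarith, le_refl _⟩
  have hF := ((hv.differentiableOn (by norm_num)) _ hmem).hasFDerivWithinAt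
  have h1 : HasDerivWithinAt (fun t : ℝ => (s, t)) ((0 : ℝ), (1 : ℝ))
      (Set.Ici 0 ∩ {t | s ^ 2 + t ^ 2 < (2 * r) ^ 2}) 0 :=
    ((hasDerivAt_const (0 : ℝ) s).prodMk (hasDerivAt_id (0 : ℝ))).hasDerivWithinAt
  have h2 := HasFDerivWithinAt.comp_hasDerivWithinAt (f := fun t : ℝ => (s, t)) 0 hF h1 (by
    rintro t ⟨ht0, ht⟩
    simp only [cballPlus, Set.mem_ofPred_eq, nrm_le_iff hR.le] at ht ⊢
    exact ⟨ht.le, ht0⟩)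
  have hnb : {t : ℝ | s ^ 2 + t ^ 2 < (2 * r) ^ 2} ∈ nhds (0 : ℝ) := by
    apply IsOpen.mem_nhds (isOpen_lt (by fun_prop) (by fun_prop))
    simp only [Set.mem_ofPred_eq]; linarith
  rw [hasDerivWithinAt_inter hnb] at h2
  exact h2.derivWithin (uniqueDiffOn_Ici 0 0 (Set.self_mem_Ici))

/-- The divergence of `η³ e^v ∇v`. -/
def divF (ρ : ℝ) (v P Q a F : ℝ × ℝ → ℝ) (p : ℝ × ℝ) : ℝ :=
  eta ρ p ^ 3 * Real.exp (v p) * (P p ^ 2 + Q p ^ 2) +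
    3 * eta ρ p ^ 2 * Real.exp (v p) *
      ((-2 * p.1 * (ρ ^ 2 - p.2 ^ 2)) * P p + (-2 * p.2 * (ρ ^ 2 - p.1 ^ 2)) * Q p)
    - eta ρ p ^ 3 * Real.exp (v p) * (a p + F p * Real.exp (v p) ^ 2)

lemma rect_ae (ρ : ℝ) : (Set.Ioo (-ρ) ρ ×ˢ Set.Ioo 0 ρ : Set (ℝ × ℝ)) =ᵐ[volume]
    Set.Icc ((-ρ, 0) : ℝ × ℝ) (ρ, ρ) := by
  rw [← Set.Icc_prod_Icc, Measure.volume_eq_prod]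
  exact Measure.set_prod_ae_eq Ioo_ae_eq_Icc Ioo_ae_eq_Icc

lemma div_identity {r : ℝ} (hr : 0 < r) {a F v : ℝ × ℝ → ℝ} {H : ℝ → ℝ}
    (ha : ContinuousOn a (cballPlus (2 * r))) (hF : ContinuousOn F (cballPlus (2 * r)))
    (hv : ContDiffOn ℝ 2 v (cballPlus (2 * r)))
    (heq : ∀ p ∈ ballPlus (2 * r), -lap v p = a p + F p * Real.exp (2 * v p))
    (hbd : ∀ s : ℝ, |s| < 2 * r →
        -derivWithin (fun t => v (s, t)) (Set.Ici 0) 0 = H s * Real.exp (v (s, 0)))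
    {ρ : ℝ} (hρ : ρ = 5 * r / 4) {P Q : ℝ × ℝ → ℝ}
    (hP : P = fun q => fderivWithin ℝ v (cballPlus (2 * r)) q (1, 0))
    (hQ : Q = fun q => fderivWithin ℝ v (cballPlus (2 * r)) q (0, 1)) :
    ContinuousOn v (Set.Icc ((-ρ, 0) : ℝ × ℝ) (ρ, ρ)) ∧
    ContinuousOn P (Set.Icc ((-ρ, 0) : ℝ × ℝ) (ρ, ρ)) ∧
    ContinuousOn Q (Set.Icc ((-ρ, 0) : ℝ × ℝ) (ρ, ρ)) ∧
    IntegrableOn (divF ρ v P Q a F) (Set.Icc ((-ρ, 0) : ℝ × ℝ) (ρ, ρ)) ∧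
    ∫ p in Set.Icc ((-ρ, 0) : ℝ × ℝ) (ρ, ρ), divF ρ v P Q a F p =
      ∫ s in (-ρ)..ρ, eta ρ (s, 0) ^ 3 * Real.exp (v (s, 0)) ^ 2 * H s := by
  have hR : 0 < 2 * r := by positivity
  have hρ0 : 0 < ρ := by rw [hρ]; positivity
  have hsub : Set.Icc ((-ρ, 0) : ℝ × ℝ) (ρ, ρ) ⊆ cballPlus (2 * r) := by
    rw [hρ]; exact rect_sub hr
  have hint : (Set.Ioo (-ρ) ρ ×ˢ Set.Ioo 0 ρ : Set (ℝ × ℝ)) ⊆ ballPlus (2 * r) := by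
    rw [hρ]; exact rect_int hr
  have hvc := hv.continuousOn.mono hsub
  have hLc := (hv.continuousOn_fderivWithin (cballPlus_uniq hR) (by norm_num)).mono hsub
  have hPc : ContinuousOn P (Set.Icc ((-ρ, 0) : ℝ × ℝ) (ρ, ρ)) := by
    rw [hP]; exact hLc.clm_apply continuousOn_const
  have hQc : ContinuousOn Q (Set.Icc ((-ρ, 0) : ℝ × ℝ) (ρ, ρ)) := by
    rw [hQ]; exact hLc.clm_apply continuousOn_const
  have hac := ha.mono hsub
  have hFc := hF.mono hsub
  have hDc : ContinuousOn (divF ρ v P Q a F) (Set.Icc ((-ρ, 0) : ℝ × ℝ) (ρ, ρ)) := by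
    unfold divF eta
    fun_prop
  have hDi := hDc.integrableOn_compact (μ := volume) isCompact_Icc
  refine ⟨hvc, hPc, hQc, hDi, ?_⟩
  set f : ℝ × ℝ → ℝ := fun p => eta ρ p ^ 3 * Real.exp (v p) * P p with hf
  set g : ℝ × ℝ → ℝ := fun p => eta ρ p ^ 3 * Real.exp (v p) * Q p with hg
  have hfd : ∀ p ∈ ballPlus (2 * r), DifferentiableAt ℝ f p ∧ DifferentiableAt ℝ g p ∧
      fderiv ℝ f p (1, 0) + fderiv ℝ g p (0, 1) = divF ρ v P Q a F p := by
    intro p hp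
    obtain ⟨k1, k2, k3, k4⟩ := interior_facts hr hv hp
    rw [← hP] at k2 k4
    rw [← hQ] at k3 k4
    have kv := k1.differentiableAt
    have df : DifferentiableAt ℝ f p := by
      simp only [hf, eta]; fun_prop
    have dg : DifferentiableAt ℝ g p := by
      simp only [hg, eta]; fun_prop
    refine ⟨df, dg, ?_⟩
    have l1 : HasDerivAt (fun s => v (s, p.2)) (P p) p.1 := by
      rw [hP]; exact line1 k1
    have l2 : HasDerivAt (fun t => v (p.1, t)) (Q p) p.2 := by
      rw [hQ]; exact line2 k1
    have m1 := line1 k2.hasFDerivAt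
    have m2 := line2 k3.hasFDerivAt
    have e1 : HasDerivAt (fun s => eta ρ (s, p.2)) (-2 * p.1 * (ρ ^ 2 - p.2 ^ 2)) p.1 := by
      have := (((hasDerivAt_id p.1).pow 2).const_sub (ρ ^ 2)).mul_const (ρ ^ 2 - p.2 ^ 2)
      refine HasDerivAt.congr_deriv this ?_
      simp
    have e2 : HasDerivAt (fun t => eta ρ (p.1, t)) (-2 * p.2 * (ρ ^ 2 - p.1 ^ 2)) p.2 := by
      have := (((hasDerivAt_id p.2).pow 2).const_sub (ρ ^ 2)).const_mul (ρ ^ 2 - p.1 ^ 2)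
      refine HasDerivAt.congr_deriv this ?_
      simp; ring
    have f1 := (line1 df.hasFDerivAt).unique (((e1.pow 3).mul l1.exp).mul m1)
    have g1 := (line2 dg.hasFDerivAt).unique (((e2.pow 3).mul l2.exp).mul m2)
    have hl := heq p hp
    rw [k4, show 2 * v p = v p + v p by ring, Real.exp_add] at hl
    rw [f1, g1]
    simp only [divF, Prod.mk.eta, Pi.mul_apply, Pi.pow_apply]
    push_cast
    linear_combination (-(eta ρ p ^ 3 * Real.exp (v p))) * hl
  have hae : ∀ᵐ p ∂(volume.restrict (Set.Icc ((-ρ, 0) : ℝ × ℝ) (ρ, ρ))),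
      divF ρ v P Q a F p = fderiv ℝ f p (1, 0) + fderiv ℝ g p (0, 1) := by
    rw [← Measure.restrict_congr_set (rect_ae ρ)]
    refine (ae_restrict_iff' (measurableSet_Ioo.prod measurableSet_Ioo)).2 (Eventually.of_forall ?_)
    intro p hp
    exact (hfd p (hint hp)).2.2.symm
  rw [integral_congr_ae hae]
  have main := integral_divergence_prod_Icc_of_hasFDerivAt_off_countable_of_le f g
    (fderiv ℝ f) (fderiv ℝ g) (-ρ, 0) (ρ, ρ) ⟨by simp; linarith, hρ0.le⟩ ∅ Set.countable_empty
    (by simp only [hf, eta]; fun_prop) (by simp only [hg, eta]; fun_prop)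
    (fun x hx => (hfd x (hint hx.1)).1.hasFDerivAt)
    (fun x hx => (hfd x (hint hx.1)).2.1.hasFDerivAt)
    (hDi.congr hae)
  rw [main]
  have z1 : ∀ x, g (x, ρ) = 0 := fun x => by simp [hg, eta]
  have z2 : ∀ y, f (ρ, y) = 0 := fun x => by simp [hf, eta]
  have z3 : ∀ y, f (-ρ, y) = 0 := fun x => by simp [hf, eta]
  simp only [z1, z2, z3, intervalIntegral.integral_zero, zero_sub, add_zero, sub_zero]
  rw [← intervalIntegral.integral_neg]
  apply intervalIntegral.integral_congr
  intro s hs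
  rw [Set.uIcc_of_le (by linarith)] at hs
  have hs' : |s| < 2 * r := by
    rw [abs_lt]; constructor <;> linarith [hs.1, hs.2]
  have := hbd s hs'
  rw [boundary_fact hr hv hs'] at this
  have hq : Q (s, 0) = fderivWithin ℝ v (cballPlus (2 * r)) (s, 0) (0, 1) := by rw [hQ]
  rw [← hq] at this
  simp only [hg]
  linear_combination (eta ρ (s, 0) ^ 3 * Real.exp (v (s, 0))) * this

set_option maxHeartbeats 4000000

/-- **Uniform energy bound where the curvatures are negative** (cf. Lemma 4.2(b)): if
`−Δv = a + F e^{2v}` in `B_{2r}⁺` and `∂v/∂ν = H e^{v}` on `Γ_{2r}` with `|a| ≤ 1`,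
`F ≤ −ε`, `H ≤ −ε`, then `∫_{B_r⁺} (|∇v⁺|² + (v⁺)⁴) dx + ∫_{Γ_r} (v⁺)² dl ≤ C(r, ε)`. -/
theorem energy_bound_negative_region (r ε : ℝ) (hr : 0 < r) (hε0 : 0 < ε) (hε1 : ε < 1) :
    ∃ C : ℝ, ∀ (a F : ℝ × ℝ → ℝ) (H : ℝ → ℝ) (v : ℝ × ℝ → ℝ),
      ContinuousOn a (cballPlus (2 * r)) →
      ContinuousOn F (cballPlus (2 * r)) →
      ContinuousOn H (Set.Icc (-(2 * r)) (2 * r)) →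
      (∀ p ∈ cballPlus (2 * r), |a p| ≤ 1) →
      (∀ p ∈ cballPlus (2 * r), F p ≤ -ε) →
      (∀ s ∈ Set.Icc (-(2 * r)) (2 * r), H s ≤ -ε) →
      ContDiffOn ℝ 2 v (cballPlus (2 * r)) →
      (∀ p ∈ ballPlus (2 * r), -lap v p = a p + F p * Real.exp (2 * v p)) →
      (∀ s : ℝ, |s| < 2 * r →
        -derivWithin (fun t => v (s, t)) (Set.Ici 0) 0 = H s * Real.exp (v (s, 0))) →
      (∫ p in ballPlus r, (gradSq (fun q => max (v q) 0) p + max (v p) 0 ^ 4)) +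
        (∫ s in Set.Ioo (-r) r, max (v (s, 0)) 0 ^ 2) ≤ C := by
  set ρ : ℝ := 5 * r / 4 with hρ
  set η₀ : ℝ := (ρ ^ 2 - r ^ 2) ^ 2 with hη₀
  set M : ℝ := ρ ^ 8 + 36 * ρ ^ 6 with hM
  set C₀ : ℝ := M * (1 + 2 * M / ε) with hC₀
  set K : ℝ := 48 / (ε * η₀ ^ 3) with hK
  set R : Set (ℝ × ℝ) := Set.Icc ((-ρ, 0) : ℝ × ℝ) (ρ, ρ) with hRdef
  refine ⟨K * (C₀ * volume.real R), ?_⟩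
  intro a F H v ha hF hH ha1 hF1 hH1 hv heq hbd
  have hρ0 : 0 < ρ := by positivity
  have hρr : 0 < ρ ^ 2 - r ^ 2 := by rw [hρ]; nlinarith
  have hη₀0 : 0 < η₀ := by positivity
  have hK0 : 0 < K := by positivity
  have hKη : K * (ε * η₀ ^ 3) = 48 := by rw [hK]; field_simp
  obtain ⟨P, hP⟩ : ∃ P : ℝ × ℝ → ℝ,
    P = fun q => fderivWithin ℝ v (cballPlus (2 * r)) q (1, 0) := ⟨_, rfl⟩
  obtain ⟨Q, hQ⟩ : ∃ Q : ℝ × ℝ → ℝ,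
    Q = fun q => fderivWithin ℝ v (cballPlus (2 * r)) q (0, 1) := ⟨_, rfl⟩
  obtain ⟨hvc, hPc, hQc, hDi, hid⟩ := div_identity hr ha hF hv heq hbd hρ hP hQ
  rw [← hRdef] at hvc hPc hQc hDi hid
  have hsub : R ⊆ cballPlus (2 * r) := rect_sub hr
  -- the comparison function
  set G : ℝ × ℝ → ℝ := fun p => eta ρ p ^ 3 *
    (1 / 2 * (Real.exp (v p) * (P p ^ 2 + Q p ^ 2)) + ε / 2 * Real.exp (v p) ^ 3) with hG
  have hGc : ContinuousOn G R := by simp only [hG, eta]; fun_prop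
  have hGi : IntegrableOn G R := hGc.integrableOn_compact isCompact_Icc
  have hηnn : ∀ p ∈ R, 0 ≤ eta ρ p := by
    rintro ⟨s, t⟩ ⟨⟨h1, h2⟩, ⟨h3, h4⟩⟩
    simp only at h1 h2 h3 h4
    exact mul_nonneg (by simp only; nlinarith) (by simp only; nlinarith)
  have hGnn : ∀ p ∈ R, 0 ≤ G p := by
    intro p hp
    have := hηnn p hp
    simp only [hG]; positivity
  have hpt : ∀ p ∈ R, G p - C₀ ≤ divF ρ v P Q a F p := by
    intro p hp
    refine pointwise (hηnn p hp) (Real.exp_pos _) hε0 (ha1 p (hsub hp)) (hF1 p (hsub hp)) ?_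
    obtain ⟨s, t⟩ := p
    obtain ⟨⟨h1, h2⟩, ⟨h3, h4⟩⟩ := hp
    simp only at h1 h2 h3 h4
    simp only [eta, hM]
    have hs : 0 ≤ ρ ^ 2 - s ^ 2 := by nlinarith
    have ht : 0 ≤ ρ ^ 2 - t ^ 2 := by nlinarith
    have hs' : ρ ^ 2 - s ^ 2 ≤ ρ ^ 2 := by nlinarith
    have ht' : ρ ^ 2 - t ^ 2 ≤ ρ ^ 2 := by nlinarith
    have b1 : ((ρ ^ 2 - s ^ 2) * (ρ ^ 2 - t ^ 2)) ^ 2 ≤ (ρ ^ 2 * ρ ^ 2) ^ 2 := by gcongr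
    have b2 : s ^ 2 * (ρ ^ 2 - t ^ 2) ^ 2 ≤ ρ ^ 2 * (ρ ^ 2) ^ 2 := by
      gcongr ?_ * ?_ ^ 2
      linarith
    have b3 : t ^ 2 * (ρ ^ 2 - s ^ 2) ^ 2 ≤ ρ ^ 2 * (ρ ^ 2) ^ 2 := by
      gcongr ?_ * ?_ ^ 2
      linarith
    nlinarith
  have hRm : MeasurableSet R := measurableSet_Icc
  have hRf : volume R ≠ ⊤ := isCompact_Icc.measure_lt_top.ne
  have hCi : IntegrableOn (fun _ : ℝ × ℝ => C₀) R := integrableOn_const hRf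
  have hI1 : (∫ p in R, G p) - C₀ * volume.real R ≤ ∫ p in R, divF ρ v P Q a F p := by
    have := setIntegral_mono_on (hGi.sub hCi) hDi hRm hpt
    rw [integral_sub' hGi hCi] at this
    simpa [mul_comm] using this
  -- boundary
  have hmaps : Set.MapsTo (fun s : ℝ => (s, (0 : ℝ))) (Set.Icc (-ρ) ρ) R := by
    intro s hs
    exact ⟨⟨hs.1, le_refl _⟩, ⟨hs.2, hρ0.le⟩⟩
  have hvb : ContinuousOn (fun s : ℝ => v (s, 0)) (Set.Icc (-ρ) ρ) :=
    hvc.comp (by fun_prop) hmaps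
  have hIs : Set.Icc (-ρ) ρ ⊆ Set.Icc (-(2 * r)) (2 * r) :=
    Set.Icc_subset_Icc (by linarith) (by linarith)
  have hHc := hH.mono hIs
  set B : ℝ → ℝ := fun s => eta ρ (s, 0) ^ 3 * Real.exp (v (s, 0)) ^ 2 with hB
  have hBc : ContinuousOn B (Set.Icc (-ρ) ρ) := by simp only [hB, eta]; fun_prop
  have hBi : IntegrableOn B (Set.Icc (-ρ) ρ) := hBc.integrableOn_compact isCompact_Icc
  have hBHi : IntegrableOn (fun s => B s * H s) (Set.Icc (-ρ) ρ) :=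
    (hBc.mul hHc).integrableOn_compact isCompact_Icc
  have hBnn : ∀ s ∈ Set.Icc (-ρ) ρ, 0 ≤ B s := by
    intro s hs
    have := hηnn _ (hmaps hs)
    simp only [hB]; positivity
  have hI2 : ∫ p in R, divF ρ v P Q a F p ≤ ∫ s in Set.Icc (-ρ) ρ, B s * (-ε) := by
    rw [hid, intervalIntegral.integral_of_le (by linarith), ← integral_Icc_eq_integral_Ioc]
    exact setIntegral_mono_on hBHi (hBi.mul_const _) measurableSet_Icc
      (fun s hs => mul_le_mul_of_nonneg_left (hH1 s (hIs hs)) (hBnn s hs))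
  rw [integral_mul_const] at hI2
  -- conclusion
  have hJ1 : (∫ p in ballPlus r, (gradSq (fun q => max (v q) 0) p + max (v p) 0 ^ 4)) ≤
      K * ∫ p in R, G p := by
    have hbR : ballPlus r ⊆ R := by
      rintro ⟨s, t⟩ hp
      simp only [ballPlus, Set.mem_ofPred_eq, nrm_lt_iff hr] at hp
      have h1 := abs_le_of_sq_le_sq' (show s ^ 2 ≤ ρ ^ 2 by nlinarith) hρ0.le
      have h2 := abs_le_of_sq_le_sq' (show t ^ 2 ≤ ρ ^ 2 by nlinarith) hρ0.le
      exact ⟨⟨h1.1, hp.2.le⟩, ⟨h1.2, h2.2⟩⟩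
    have hbm : MeasurableSet (ballPlus r) := (ballPlus_open hr).measurableSet
    calc _ ≤ ∫ p in ballPlus r, K * G p := by
          apply integral_mono_of_nonneg
          · exact Eventually.of_forall fun p => by simp only [gradSq, Pi.zero_apply]; positivity
          · exact (hGi.mono_set hbR).const_mul K
          · refine (ae_restrict_iff' hbm).2 (Eventually.of_forall fun p hp => ?_)
            have hp2 : p ∈ ballPlus (2 * r) := ⟨lt_of_lt_of_le hp.1 (by linarith), hp.2⟩
            obtain ⟨k1, -, -, -⟩ := interior_facts hr hv hp2
            have d1 := deriv_max_sq (line1 k1)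
            have d2 := deriv_max_sq (line2 k1)
            have hPp : fderivWithin ℝ v (cballPlus (2 * r)) p (1, 0) = P p := by rw [hP]
            have hQp : fderivWithin ℝ v (cballPlus (2 * r)) p (0, 1) = Q p := by rw [hQ]
            rw [hPp] at d1
            rw [hQp] at d2
            have d3 := pow4_le (v p)
            have hη : η₀ ≤ eta ρ p := by
              have := (nrm_lt_iff hr).1 hp.1
              rw [hη₀, sq]
              exact mul_le_mul (by nlinarith) (by nlinarith) hρr.le (by nlinarith)
            have hη3 : η₀ ^ 3 ≤ eta ρ p ^ 3 := by gcongr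
            have e0 := Real.exp_pos (v p)
            simp only [gradSq, hG]
            have s1 : 48 ≤ K * ε * eta ρ p ^ 3 := by
              calc (48 : ℝ) = K * ε * η₀ ^ 3 := by rw [← hKη]; ring
                _ ≤ _ := by gcongr
            have s2 : 48 ≤ K * eta ρ p ^ 3 := by
              have hηp : 0 < eta ρ p := lt_of_lt_of_le hη₀0 hη
              have : 0 < K * eta ρ p ^ 3 := by positivity
              nlinarith
            have t1 := mul_le_mul_of_nonneg_right s1 (by positivity : 0 ≤ Real.exp (v p) ^ 3)
            have t2 := mul_le_mul_of_nonneg_right s2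
              (by positivity : 0 ≤ Real.exp (v p) * (P p ^ 2 + Q p ^ 2))
            have t3 : 0 ≤ Real.exp (v p) * (P p ^ 2 + Q p ^ 2) := by positivity
            simp only [Prod.mk.eta] at d1 d2
            nlinarith
      _ = K * ∫ p in ballPlus r, G p := integral_const_mul _ _
      _ ≤ K * ∫ p in R, G p := by
          refine mul_le_mul_of_nonneg_left ?_ hK0.le
          exact setIntegral_mono_set hGi
            ((ae_restrict_iff' hRm).2 (Eventually.of_forall hGnn)) hbR.eventuallyLE
  have hJ2 : (∫ s in Set.Ioo (-r) r, max (v (s, 0)) 0 ^ 2) ≤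
      K * ε * ∫ s in Set.Icc (-ρ) ρ, B s := by
    have hbR : Set.Ioo (-r) r ⊆ Set.Icc (-ρ) ρ := fun s hs =>
      ⟨by linarith [hs.1], by linarith [hs.2]⟩
    calc _ ≤ ∫ s in Set.Ioo (-r) r, K * ε * B s := by
          apply integral_mono_of_nonneg
          · exact Eventually.of_forall fun p => by simp only [Pi.zero_apply]; positivity
          · exact (hBi.mono_set hbR).const_mul _
          · refine (ae_restrict_iff' measurableSet_Ioo).2 (Eventually.of_forall fun s hs => ?_)
            have hη : η₀ ≤ eta ρ (s, 0) := by
              rw [hη₀, sq]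
              have h1 := hs.1
              have h2 := hs.2
              exact mul_le_mul (by simp only; nlinarith) (by simp only; nlinarith) hρr.le
                (by simp only; nlinarith)
            have hη3 : η₀ ^ 3 ≤ eta ρ (s, 0) ^ 3 := by gcongr
            have d3 := pow2_le (v (s, 0))
            have e0 := Real.exp_pos (v (s, 0))
            have s1 : 48 ≤ K * ε * eta ρ (s, 0) ^ 3 := by
              calc (48 : ℝ) = K * ε * η₀ ^ 3 := by rw [← hKη]; ring
                _ ≤ _ := by gcongr
            have t1 := mul_le_mul_of_nonneg_right s1
              (by positivity : 0 ≤ Real.exp (v (s, 0)) ^ 2)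
            have t2 : 0 ≤ Real.exp (v (s, 0)) ^ 2 := by positivity
            simp only [hB]
            linarith
      _ = K * ε * ∫ s in Set.Ioo (-r) r, B s := integral_const_mul _ _
      _ ≤ _ := by
          refine mul_le_mul_of_nonneg_left ?_ (by positivity)
          exact setIntegral_mono_set hBi
            ((ae_restrict_iff' measurableSet_Icc).2 (Eventually.of_forall hBnn)) hbR.eventuallyLE
  have hfin : K * ((∫ p in R, G p) + ε * ∫ s in Set.Icc (-ρ) ρ, B s) ≤
      K * (C₀ * volume.real R) := by
    refine mul_le_mul_of_nonneg_left ?_ hK0.le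
    linarith
  linarith
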